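/- arXiv:1608.01233 — 2 statements merged into one kernel-verified Lean document; each statement's English description precedes it below -/
import Mathlib

section
/- Let γ > 0 and 0 ≤ X₀ < Y₀ be real numbers, set λ = Y₀ - X₀, and let η(t,u) = (e^{γu} - γt(e^{γu} - 1))^{X₀/γ} / (1 - γt(e^{γu} - 1))^{Y₀/γ}. Then for every t ≥ 0, the second partial derivative of η with respect to u at u = 0, minus the square of the first partial derivative of η with respect to u at u = 0, equals λγ³t² + (2X₀ + λ)γ²t. -/
/-!
Write `M p u = 1 - p + p e^{γu}`. Both bases in `η` are of this form:
`η(t, ·) = M (1 - γt) ^ (X₀/γ) / M (-γt) ^ (Y₀/γ)`. Since `η(t, 0) = 1`, the quantity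
`∂²η/∂u²(t,0) - (∂η/∂u(t,0))²` is the second derivative of `log η(t, ·)` at `0`, and the logarithm
turns products into sums and powers into multiples. So it suffices to know that the second
derivative of `log (M p)` at `0` is the Bernoulli variance `γ² p (1 - p)`, an identity valid for
every real `p`.
-/

open scoped Topology

section LogDeriv

variable {𝕜 𝕜' : Type*} [NontriviallyNormedField 𝕜] [NontriviallyNormedField 𝕜']
  [NormedAlgebra 𝕜 𝕜'] {f : 𝕜 → 𝕜'} {x : 𝕜}

theorem contDiffAt_logDeriv {m n : WithTop ℕ∞} (hf : ContDiffAt 𝕜 n f x) (hmn : m + 1 ≤ n)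
    (hx : f x ≠ 0) : ContDiffAt 𝕜 m (logDeriv f) x := by
  simpa only [logDeriv, div_eq_mul_inv] using!
    (hf.derivWithin hmn).mul ((hf.of_le (le_self_add.trans hmn)).inv hx)

theorem deriv_logDeriv (hf : DifferentiableAt 𝕜 f x) (hf' : DifferentiableAt 𝕜 (deriv f) x)
    (hx : f x ≠ 0) :
    deriv (logDeriv f) x = iteratedDeriv 2 f x / f x - logDeriv f x ^ 2 := by
  rw [logDeriv, deriv_div hf' hf hx, iteratedDeriv_succ, iteratedDeriv_one, Pi.div_apply]
  field_simp

theorem iteratedDeriv_two_sub_sq_deriv_of_eq_one (hf : DifferentiableAt 𝕜 f x)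
    (hf' : DifferentiableAt 𝕜 (deriv f) x) (hx : f x = 1) :
    iteratedDeriv 2 f x - deriv f x ^ 2 = deriv (logDeriv f) x := by
  simp [deriv_logDeriv hf hf', logDeriv_apply, hx]

end LogDeriv

section RealPowers

variable {f g : ℝ → ℝ} {x : ℝ}

theorem logDeriv_rpow_const (hf : DifferentiableAt ℝ f x) (hx : 0 < f x) (a : ℝ) :
    logDeriv (fun u => f u ^ a) x = a * logDeriv f x := by
  have hxa : f x ^ a ≠ 0 := (Real.rpow_pos_of_pos hx a).ne'
  rw [logDeriv_apply, logDeriv_apply, deriv_rpow_const hf (.inl hx.ne'),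
    Real.rpow_sub_one hx.ne']
  field_simp

theorem logDeriv_rpow_div_rpow (hf : DifferentiableAt ℝ f x) (hg : DifferentiableAt ℝ g x)
    (hfx : 0 < f x) (hgx : 0 < g x) (a b : ℝ) :
    logDeriv (fun u => f u ^ a / g u ^ b) x = a * logDeriv f x - b * logDeriv g x := by
  rw [logDeriv_div x (Real.rpow_pos_of_pos hfx a).ne' (Real.rpow_pos_of_pos hgx b).ne'
      (hf.rpow_const (.inl hfx.ne')) (hg.rpow_const (.inl hgx.ne')),
    logDeriv_rpow_const hf hfx, logDeriv_rpow_const hg hgx]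

theorem deriv_logDeriv_rpow_div_rpow (hf : ContDiffAt ℝ 2 f x) (hg : ContDiffAt ℝ 2 g x)
    (hfx : 0 < f x) (hgx : 0 < g x) (a b : ℝ) :
    deriv (logDeriv fun u => f u ^ a / g u ^ b) x =
      a * deriv (logDeriv f) x - b * deriv (logDeriv g) x := by
  have logDeriv_eq : logDeriv (fun u => f u ^ a / g u ^ b) =ᶠ[𝓝 x]
      fun u => a * logDeriv f u - b * logDeriv g u := by
    filter_upwards [hf.eventually (by simp), hg.eventually (by simp),
      hf.continuousAt.eventually_const_lt hfx, hg.continuousAt.eventually_const_lt hgx]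
      with u hfu hgu hfu_pos hgu_pos
    exact logDeriv_rpow_div_rpow (hfu.differentiableAt two_ne_zero)
      (hgu.differentiableAt two_ne_zero) hfu_pos hgu_pos a b
  have hf' : DifferentiableAt ℝ (logDeriv f) x :=
    (contDiffAt_logDeriv hf one_add_one_eq_two.le hfx.ne').differentiableAt one_ne_zero
  have hg' : DifferentiableAt ℝ (logDeriv g) x :=
    (contDiffAt_logDeriv hg one_add_one_eq_two.le hgx.ne').differentiableAt one_ne_zero
  rw [logDeriv_eq.deriv_eq, deriv_fun_sub (hf'.const_mul a) (hg'.const_mul b),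
    deriv_const_mul_field, deriv_const_mul_field]

end RealPowers

/-- The moment generating function at `u` of a random variable equal to `γ` with probability `p` and
to `0` with probability `1 - p`. The formula is used for all real `p`, including those outside
`[0, 1]`. -/
noncomputable def scaledBernoulliMGF (γ p u : ℝ) : ℝ :=
  (1 - p) + p * Real.exp (γ * u)

namespace scaledBernoulliMGF

theorem apply_zero (γ p : ℝ) : scaledBernoulliMGF γ p 0 = 1 := by
  simp [scaledBernoulliMGF]

theorem contDiff (γ p : ℝ) {n : WithTop ℕ∞} : ContDiff ℝ n (scaledBernoulliMGF γ p) := by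
  unfold scaledBernoulliMGF
  fun_prop

theorem iteratedDeriv_of_pos {n : ℕ} (hn : 0 < n) (γ p u : ℝ) :
    iteratedDeriv n (scaledBernoulliMGF γ p) u = p * (γ ^ n * Real.exp (γ * u)) := by
  unfold scaledBernoulliMGF
  rw [iteratedDeriv_const_add hn, iteratedDeriv_const_mul_field, iteratedDeriv_exp_const_mul]

theorem deriv_logDeriv_zero (γ p : ℝ) :
    deriv (logDeriv (scaledBernoulliMGF γ p)) 0 = γ ^ 2 * (p * (1 - p)) := by
  have hM : ContDiff ℝ 2 (scaledBernoulliMGF γ p) := contDiff γ p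
  rw [← iteratedDeriv_two_sub_sq_deriv_of_eq_one (hM.differentiable two_ne_zero 0)
    (hM.differentiable_deriv_two 0) (apply_zero γ p), ← iteratedDeriv_one,
    iteratedDeriv_of_pos two_pos, iteratedDeriv_of_pos one_pos, mul_zero, Real.exp_zero]
  ring

end scaledBernoulliMGF

/-- The moment generating function `η(t, ·)` of the first coordinate at time `t` of the continuum
random walk along a 45-degree hill started at `(X₀, Y₀)`. -/
noncomputable def hillMGF (γ X₀ Y₀ t u : ℝ) : ℝ :=
  (Real.exp (γ * u) - γ * t * (Real.exp (γ * u) - 1)) ^ (X₀ / γ) /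
    (1 - γ * t * (Real.exp (γ * u) - 1)) ^ (Y₀ / γ)

namespace hillMGF

variable (γ X₀ Y₀ t : ℝ)

theorem eq_scaledBernoulliMGF_rpow_div_rpow :
    hillMGF γ X₀ Y₀ t = fun u =>
      scaledBernoulliMGF γ (1 - γ * t) u ^ (X₀ / γ) /
        scaledBernoulliMGF γ (-(γ * t)) u ^ (Y₀ / γ) := by
  funext u
  unfold hillMGF scaledBernoulliMGF
  congr 2 <;> ring

theorem apply_zero : hillMGF γ X₀ Y₀ t 0 = 1 := by
  simp [hillMGF]

theorem contDiffAt_zero {n : WithTop ℕ∞} : ContDiffAt ℝ n (hillMGF γ X₀ Y₀ t) 0 := by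
  have hpow (p a : ℝ) : ContDiffAt ℝ n (fun u => scaledBernoulliMGF γ p u ^ a) 0 :=
    (scaledBernoulliMGF.contDiff γ p).contDiffAt.rpow_const_of_ne
      (by simp [scaledBernoulliMGF.apply_zero])
  rw [eq_scaledBernoulliMGF_rpow_div_rpow]
  exact (hpow _ _).div (hpow _ _) (by simp [scaledBernoulliMGF.apply_zero])

theorem deriv_logDeriv_zero :
    deriv (logDeriv (hillMGF γ X₀ Y₀ t)) 0 =
      X₀ / γ * (γ ^ 2 * ((1 - γ * t) * (γ * t))) + Y₀ / γ * (γ ^ 2 * (γ * t * (1 + γ * t))) := by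
  have hpos (p : ℝ) : 0 < scaledBernoulliMGF γ p 0 := by
    simp [scaledBernoulliMGF.apply_zero]
  rw [eq_scaledBernoulliMGF_rpow_div_rpow,
    deriv_logDeriv_rpow_div_rpow (scaledBernoulliMGF.contDiff γ _).contDiffAt
      (scaledBernoulliMGF.contDiff γ _).contDiffAt (hpos _) (hpos _),
    scaledBernoulliMGF.deriv_logDeriv_zero, scaledBernoulliMGF.deriv_logDeriv_zero]
  ring

end hillMGF

theorem stmt_6_general {γ : ℝ} (hγ : γ ≠ 0) (X₀ Y₀ t : ℝ) :
    iteratedDeriv 2 (hillMGF γ X₀ Y₀ t) 0 - deriv (hillMGF γ X₀ Y₀ t) 0 ^ 2 =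
      (Y₀ - X₀) * γ ^ 3 * t ^ 2 + (X₀ + Y₀) * γ ^ 2 * t := by
  have hmgf : ContDiffAt ℝ 2 (hillMGF γ X₀ Y₀ t) 0 := hillMGF.contDiffAt_zero γ X₀ Y₀ t
  have hderiv : ContDiffAt ℝ 1 (deriv (hillMGF γ X₀ Y₀ t)) 0 :=
    hmgf.derivWithin one_add_one_eq_two.le
  rw [iteratedDeriv_two_sub_sq_deriv_of_eq_one (hmgf.differentiableAt two_ne_zero)
    (hderiv.differentiableAt one_ne_zero) (hillMGF.apply_zero γ X₀ Y₀ t),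
    hillMGF.deriv_logDeriv_zero]
  field_simp
  ring

/-- For the 45-degree-hill moment generating function
`η(t,u) = (e^{γu} - γt(e^{γu}-1))^{X₀/γ} / (1 - γt(e^{γu}-1))^{Y₀/γ}`
with `λ = Y₀ - X₀`, for every `t ≥ 0`,
`∂²η/∂u²(t,0) - (∂η/∂u(t,0))² = λγ³t² + (2X₀ + λ)γ²t` (the variance of `X(t)`). -/
theorem stmt_6 (γ X₀ Y₀ lam : ℝ) (hγ : 0 < γ) (hX₀ : 0 ≤ X₀) (hXY : X₀ < Y₀)
    (hlam : lam = Y₀ - X₀)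
    (η : ℝ → ℝ → ℝ)
    (hη : ∀ t u : ℝ, η t u =
      (Real.exp (γ * u) - γ * t * (Real.exp (γ * u) - 1)) ^ (X₀ / γ) /
        (1 - γ * t * (Real.exp (γ * u) - 1)) ^ (Y₀ / γ)) :
    ∀ t : ℝ, 0 ≤ t →
      iteratedDeriv 2 (fun u => η t u) 0 - (deriv (fun u => η t u) 0) ^ 2
        = lam * γ ^ 3 * t ^ 2 + (2 * X₀ + lam) * γ ^ 2 * t := by
  intro t _
  have hη_eq : (fun u => η t u) = hillMGF γ X₀ Y₀ t := funext (hη t)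
  rw [hη_eq, stmt_6_general hγ.ne', hlam]
  ring
end

section
/- Let μ be a real number with μ ≠ 1 and let Z be a real number with -1 < Z < 1 and Z ≠ 0. Then the series ∑_{n=0}^{∞} (∏_{k=0}^{n-1}(μ + k)) · Zⁿ/(n+1)! converges and its sum equals (1 - (1-Z)^{1-μ}) / ((1-μ)·Z). -/
/-!
Writing `(a)ₙ = a (a + 1) ⋯ (a + n - 1)`, the binomial series is
`(1 - z) ^ (-a) = ∑ₙ (a)ₙ zⁿ / n!` for `‖z‖ < 1`. Take `a = μ - 1`: the constant term is `1`, and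
since `(μ - 1)ₙ₊₁ = (μ - 1) (μ)ₙ`, the remaining terms are `(μ - 1) z` times those of
`₂F₁(μ, 1; 2; z)`.
-/

open Finset
open scoped Nat

theorem ascPochhammer_eval_eq_prod_range {R : Type*} [CommSemiring R] (a : R) (n : ℕ) :
    (ascPochhammer R n).eval a = ∏ k ∈ range n, (a + k) := by
  induction n with
  | zero => simp
  | succ n ih => rw [ascPochhammer_succ_eval, prod_range_succ, ih]

theorem multichoose_eq_prod_range_div_factorial {K : Type*} [Field K] [CharZero K]
    (a : K) (n : ℕ) : Ring.multichoose a n = (∏ k ∈ range n, (a + k)) / n ! := by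
  rw [eq_div_iff (by exact_mod_cast n.factorial_ne_zero), mul_comm, ← nsmul_eq_mul,
    Ring.factorial_nsmul_multichoose_eq_ascPochhammer, Polynomial.ascPochhammer_smeval_eq_eval,
    ascPochhammer_eval_eq_prod_range]

theorem prod_range_succ_sub_one_add {R : Type*} [CommRing R] (a : R) (n : ℕ) :
    ∏ k ∈ range (n + 1), (a - 1 + k) = (a - 1) * ∏ k ∈ range n, (a + k) := by
  have shift (k : ℕ) : a - 1 + (k + 1 : ℕ) = a + k := by push_cast; ring
  simp only [prod_range_succ', shift, Nat.cast_zero, add_zero, mul_comm]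

theorem hasSum_one_sub_cpow_neg (a : ℂ) {z : ℂ} (hz : ‖z‖ < 1) :
    HasSum (fun n : ℕ ↦ (∏ k ∈ range n, (a + k)) / n ! * z ^ n) ((1 - z) ^ (-a)) := by
  have hz_ball : z ∈ Metric.eball (0 : ℂ) 1 := by
    simpa [← ENNReal.ofReal_one, Metric.eball_ofReal] using hz
  have h := (Complex.one_div_one_sub_cpow_hasFPowerSeriesOnBall_zero a).hasSum hz_ball
  simpa [← Ring.multichoose_eq, multichoose_eq_prod_range_div_factorial, Complex.cpow_neg,
    mul_comm] using h

theorem hasSum_one_sub_one_sub_cpow (μ : ℂ) {z : ℂ} (hz : ‖z‖ < 1) :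
    HasSum (fun n : ℕ ↦ (1 - μ) * z * ((∏ k ∈ range n, (μ + k)) * z ^ n / (n + 1)!))
      (1 - (1 - z) ^ (1 - μ)) := by
  have h := (hasSum_nat_add_iff' 1).mpr (hasSum_one_sub_cpow_neg (μ - 1) hz)
  convert! h.neg using 1
  · funext n
    rw [prod_range_succ_sub_one_add]
    ring
  · simp

theorem stmt_15_general (μ z : ℂ) (hμ : μ ≠ 1) (hz : ‖z‖ < 1) (hz₀ : z ≠ 0) :
    HasSum (fun n : ℕ ↦ (∏ k ∈ range n, (μ + k)) * z ^ n / (n + 1)!)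
      ((1 - (1 - z) ^ (1 - μ)) / ((1 - μ) * z)) := by
  have hc : (1 - μ) * z ≠ 0 := mul_ne_zero (sub_ne_zero.mpr hμ.symm) hz₀
  rw [← hasSum_mul_left_iff hc, mul_div_cancel₀ _ hc]
  exact hasSum_one_sub_one_sub_cpow μ hz

/-- Gauss hypergeometric identity
`₂F₁(μ, 1; 2; Z) = ∑_n (μ)ₙ Zⁿ/(n+1)! = (1 - (1-Z)^{1-μ})/((1-μ)Z)`
for `μ ≠ 1` and `-1 < Z < 1`, `Z ≠ 0`. -/
theorem stmt_15 (μ Z : ℝ) (hμ : μ ≠ 1) (hZ₁ : -1 < Z) (hZ₂ : Z < 1) (hZ₀ : Z ≠ 0) :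
    HasSum
      (fun n : ℕ =>
        (∏ k ∈ Finset.range n, (μ + k)) * Z ^ n / (Nat.factorial (n + 1)))
      ((1 - (1 - Z) ^ (1 - μ)) / ((1 - μ) * Z)) := by
  have h := stmt_15_general μ Z (mod_cast hμ) (by simpa [abs_lt] using ⟨hZ₁, hZ₂⟩) (mod_cast hZ₀)
  rw [← Complex.hasSum_ofReal]
  simpa [Complex.ofReal_cpow (sub_nonneg.mpr hZ₂.le)] using h
end
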